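/- If the quasi-greedy orbit of 1 hits the point 1/(β(β−1)) for the first time, then the greedy expansion of 1 is finite (1 has a β-expansion ending in 0^∞), and there exists n₀ ≥ 1 such that the quasi-greedy expansion (η_n) of 1 satisfies η_{n+n₀} = 1 − η_n for all n ≥ 1; in particular (η_n) has the periodic form (a_1⋯a_{n₀} \overline{a_1⋯a_{n₀}})^∞, where overline denotes digit-wise reflection a ↦ 1−a. -/

import Mathlib

/-- The value `Σ_{n≥1} a_n β^{-n}` of a digit sequence (indexed from 0, so `a i = a_{i+1}`). -/
noncomputable def betaVal (β : ℝ) (a : ℕ → ℕ) : ℝ := ∑' n : ℕ, (a n : ℝ) / β ^ (n + 1)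

/-- `Ũ_β`: the set of 0-1 sequences that are the unique β-expansion of their value. -/
def UTilde (β : ℝ) : Set (ℕ → ℕ) :=
  {a | (∀ n, a n ≤ 1) ∧
    ∀ b : ℕ → ℕ, (∀ n, b n ≤ 1) → betaVal β b = betaVal β a → b = a}

/-- The word `w` occurs in the sequence `x` starting at position `n`. -/
def OccursAt (w : List ℕ) (x : ℕ → ℕ) (n : ℕ) : Prop :=
  ∀ i : Fin w.length, x (n + i.1) = w.get i

/-- `Y` is a subshift of finite type inside the ambient full shift `{0,1}^ℕ`: there is a
finite set `F` of forbidden words such that `Y` consists exactly of the 0-1 sequences in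
which no word of `F` occurs. -/
def IsSFT01 (Y : Set (ℕ → ℕ)) : Prop :=
  ∃ F : Set (List ℕ), F.Finite ∧
    Y = {x | (∀ n, x n ≤ 1) ∧ ∀ w ∈ F, ∀ n, ¬ OccursAt w x n}

/-- Strict lexicographic order on sequences. -/
def LexLt (a b : ℕ → ℕ) : Prop :=
  ∃ n, (∀ k < n, a k = b k) ∧ a n < b n

/-- `η` is the quasi-greedy expansion of `1` in base `β`: the lexicographically largest
0-1 sequence with infinitely many digits `1` whose value is `1`. -/
def QuasiGreedy (β : ℝ) (η : ℕ → ℕ) : Prop :=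
  (∀ n, η n ≤ 1) ∧ (∀ N, ∃ n ≥ N, η n = 1) ∧ betaVal β η = 1 ∧
    ∀ ζ : ℕ → ℕ, (∀ n, ζ n ≤ 1) → (∀ N, ∃ n ≥ N, ζ n = 1) →
      betaVal β ζ = 1 → ζ ≠ η → LexLt ζ η

/-- The quasi-greedy orbit `Q` of `1` hits the point `c` for the first time: `Q k = c`
for some `k ≥ 1` while `Q i ∈ [0, 1/β) ∪ (1/(β(β-1)), 1/(β-1)]` for `1 ≤ i ≤ k - 1`. -/
def HitsFirst (β : ℝ) (Q : ℕ → ℝ) (c : ℝ) : Prop :=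
  ∃ k ≥ 1, Q k = c ∧ ∀ i, 1 ≤ i → i ≤ k - 1 →
    Q i ∈ Set.Ico 0 (1 / β) ∪ Set.Ioc (1 / (β * (β - 1))) (1 / (β - 1))

/-!
The quasi-greedy expansion of `1` is read off the orbit of `1` under `T x = β x - d(x)`, where
`d(x) = 1` if `β x > 1` and `d(x) = 0` otherwise. Put `r = 1 / (β - 1)`. Outside the open interval
`(1 / β, 1 / (β (β - 1)))` the reflection `x ↦ r - x` commutes with `T` and flips the digit `d`.
If `T^k 1 = 1 / (β (β - 1))`, then `T^(k+1) 1 = r - 1` is the reflection of the starting point, so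
from time `k + 1` on the orbit is the reflection of the orbit of `1`; this gives
`η (n + k + 1) = 1 - η n`. At time `2 k + 1` the orbit is at the reflection of `T^k 1`, which is
`1 / β`. There the tail of the quasi-greedy expansion can be replaced by `1 0^∞`, a finite expansion
of `1` that is lexicographically larger than every infinite one, so the greedy expansion is finite.
-/

section Value

variable {β : ℝ} {a b : ℕ → ℕ}

lemma summable_digit_div_pow (hβ : 1 < β) (ha : ∀ n, a n ≤ 1) :
    Summable fun n ↦ (a n : ℝ) / β ^ (n + 1) := by
  have hgeom : Summable fun n ↦ β⁻¹ ^ (n + 1) :=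
    (summable_nat_add_iff 1).2
      (summable_geometric_of_lt_one (by positivity) (inv_lt_one_of_one_lt₀ hβ))
  refine hgeom.of_nonneg_of_le (fun n ↦ by positivity) fun n ↦ ?_
  have hdigit : (a n : ℝ) ≤ 1 := mod_cast ha n
  rw [inv_pow, ← one_div]
  gcongr

lemma betaVal_pos (hβ : 1 < β) (ha : ∀ n, a n ≤ 1) (hone : ∃ n, a n = 1) :
    0 < betaVal β a := by
  obtain ⟨n, hn⟩ := hone
  refine (summable_digit_div_pow hβ ha).tsum_pos (fun n ↦ by positivity) n ?_
  rw [hn]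
  positivity

lemma betaVal_eq_sum_add_shift (hβ : 1 < β) (ha : ∀ n, a n ≤ 1) (n : ℕ) :
    betaVal β a = ∑ i ∈ Finset.range n, (a i : ℝ) / β ^ (i + 1)
      + betaVal β (fun k ↦ a (n + k)) / β ^ n := by
  rw [betaVal, ← (summable_digit_div_pow hβ ha).sum_add_tsum_nat_add n, betaVal, ← tsum_div_const]
  congr! 3 with k
  rw [add_comm k n, div_div, ← pow_add]
  ring_nf

lemma betaVal_shift_succ (hβ : 1 < β) (ha : ∀ n, a n ≤ 1) (n : ℕ) :
    betaVal β (fun k ↦ a (n + 1 + k)) = β * betaVal β (fun k ↦ a (n + k)) - a n := by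
  have hsplit := betaVal_eq_sum_add_shift hβ (fun k ↦ ha (n + k)) 1
  simp only [Finset.sum_range_one, add_zero, zero_add, pow_one, ← add_assoc] at hsplit
  rw [hsplit]
  field_simp
  ring

lemma betaVal_shift_eq_of_prefix_eq (hβ : 1 < β) (ha : ∀ n, a n ≤ 1) (hb : ∀ n, b n ≤ 1) {n : ℕ}
    (hprefix : ∀ k < n, a k = b k) (hval : betaVal β a = betaVal β b) :
    betaVal β (fun k ↦ a (n + k)) = betaVal β (fun k ↦ b (n + k)) := by
  rw [betaVal_eq_sum_add_shift hβ ha n, betaVal_eq_sum_add_shift hβ hb n,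
    Finset.sum_congr rfl fun i hi ↦ by rw [hprefix i (Finset.mem_range.1 hi)]] at hval
  exact (div_left_inj' (by positivity)).1 (add_left_cancel hval)

lemma betaVal_eq_of_bounded_orbit (hβ : 1 < β) {y : ℕ → ℝ} {C : ℝ} (hbound : ∀ n, |y n| ≤ C)
    (hstep : ∀ n, y (n + 1) = β * y n - a n) : betaVal β a = y 0 := by
  have hpartial (n : ℕ) :
      ∑ i ∈ Finset.range n, (a i : ℝ) / β ^ (i + 1) = y 0 - y n * β⁻¹ ^ n := by
    induction n with
    | zero => simp
    | succ n ih =>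
      rw [Finset.sum_range_succ, ih, hstep, inv_pow, inv_pow]
      field_simp
      ring
  have hremainder : Filter.Tendsto (fun n ↦ y n * β⁻¹ ^ n) Filter.atTop (nhds 0) :=
    bdd_le_mul_tendsto_zero' C (Filter.Eventually.of_forall hbound)
      (tendsto_pow_atTop_nhds_zero_of_lt_one (by positivity) (inv_lt_one_of_one_lt₀ hβ))
  refine HasSum.tsum_eq ((hasSum_iff_tendsto_nat_of_nonneg (fun n ↦ by positivity) _).2 ?_)
  simpa only [hpartial, sub_zero] using hremainder.const_sub (y 0)

end Value

section LexOrder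

variable {β : ℝ} {a b c : ℕ → ℕ}

lemma LexLt.trans (hab : LexLt a b) (hbc : LexLt b c) : LexLt a c :=
  lt_trans (a := toLex a) (b := toLex b) (c := toLex c) hab hbc

lemma exists_terminating_lexLt (hβ : 1 < β) (ha : ∀ n, a n ≤ 1) {n : ℕ} (han : a n = 0)
    (htail : betaVal β (fun k ↦ a (n + k)) = 1 / β) :
    ∃ b : ℕ → ℕ, (∀ m, b m ≤ 1) ∧ betaVal β b = betaVal β a ∧ (∀ m > n, b m = 0) ∧
      LexLt a b := by
  let b (m : ℕ) : ℕ := if m < n then a m else if m = n then 1 else 0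
  have hb (m : ℕ) : b m ≤ 1 := by grind
  have hprefix : ∀ m < n, b m = a m := by grind
  have hbn : b n = 1 := by grind
  have hzero : ∀ m > n, b m = 0 := by grind
  have htail_zero : betaVal β (fun k ↦ b (n + 1 + k)) = 0 := by
    have hb_tail (k : ℕ) : b (n + 1 + k) = 0 := hzero _ (by lia)
    simp [betaVal, hb_tail]
  refine ⟨b, hb, ?_, hzero, n, fun m hm ↦ (hprefix m hm).symm, by lia⟩
  rw [betaVal_eq_sum_add_shift hβ hb (n + 1), htail_zero, Finset.sum_range_succ, hbn,
    Finset.sum_congr rfl fun i hi ↦ by rw [hprefix i (Finset.mem_range.1 hi)],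
    betaVal_eq_sum_add_shift hβ ha n, htail, div_div, ← pow_succ', Nat.cast_one, zero_div, add_zero]

end LexOrder

/-- The digit chosen at `x` by the quasi-greedy algorithm in a base `β ∈ (1, 2)`. The tie
`β * x = 1` is resolved to `0`, so that the remainder never vanishes. -/
noncomputable def quasiGreedyDigit (β x : ℝ) : ℕ := if 1 < β * x then 1 else 0

/-- The quasi-greedy transformation: the remainder left after the digit at `x` is read off. -/
noncomputable def quasiGreedyMap (β x : ℝ) : ℝ := β * x - quasiGreedyDigit β x

/-- The digit sequence produced by the quasi-greedy algorithm at `x`, indexed from `0` like the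
argument of `betaVal`. -/
noncomputable def quasiGreedySeq (β x : ℝ) (n : ℕ) : ℕ :=
  quasiGreedyDigit β ((quasiGreedyMap β)^[n] x)

section Algorithm

variable {β x : ℝ} {a : ℕ → ℕ}

lemma quasiGreedyDigit_of_one_lt (h : 1 < β * x) : quasiGreedyDigit β x = 1 := if_pos h

lemma quasiGreedyDigit_of_le_one (h : β * x ≤ 1) : quasiGreedyDigit β x = 0 := if_neg h.not_gt

lemma quasiGreedyDigit_le_one (β x : ℝ) : quasiGreedyDigit β x ≤ 1 := by
  unfold quasiGreedyDigit
  split_ifs <;> simp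

lemma quasiGreedySeq_le_one (β x : ℝ) (n : ℕ) : quasiGreedySeq β x n ≤ 1 :=
  quasiGreedyDigit_le_one β _

lemma quasiGreedySeq_add (β x : ℝ) (n k : ℕ) :
    quasiGreedySeq β x (n + k) = quasiGreedySeq β ((quasiGreedyMap β)^[n] x) k := by
  rw [quasiGreedySeq, quasiGreedySeq, add_comm, Function.iterate_add_apply]

lemma mapsTo_quasiGreedyMap (hβ : β ∈ Set.Ioo 1 2) :
    Set.MapsTo (quasiGreedyMap β) (Set.Ioc 0 1) (Set.Ioc 0 1) := by
  rintro x ⟨hx₀, hx₁⟩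
  obtain ⟨hβ₁, hβ₂⟩ := hβ
  rcases lt_or_ge 1 (β * x) with h | h
  · rw [quasiGreedyMap, quasiGreedyDigit_of_one_lt h, Nat.cast_one]
    constructor <;> nlinarith
  · rw [quasiGreedyMap, quasiGreedyDigit_of_le_one h, Nat.cast_zero, sub_zero]
    exact ⟨by positivity, h⟩

lemma iterate_quasiGreedyMap_mem (hβ : β ∈ Set.Ioo 1 2) (hx : x ∈ Set.Ioc 0 1) (n : ℕ) :
    (quasiGreedyMap β)^[n] x ∈ Set.Ioc 0 1 :=
  (mapsTo_quasiGreedyMap hβ).iterate n hx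

lemma betaVal_quasiGreedySeq (hβ : β ∈ Set.Ioo 1 2) (hx : x ∈ Set.Ioc 0 1) :
    betaVal β (quasiGreedySeq β x) = x := by
  refine betaVal_eq_of_bounded_orbit hβ.1 (y := fun n ↦ (quasiGreedyMap β)^[n] x) (C := 1)
    (fun n ↦ ?_) fun n ↦ Function.iterate_succ_apply' _ n x
  obtain ⟨hpos, hle⟩ := iterate_quasiGreedyMap_mem hβ hx n
  rwa [abs_of_pos hpos]

lemma betaVal_quasiGreedySeq_shift (hβ : β ∈ Set.Ioo 1 2) (hx : x ∈ Set.Ioc 0 1) (n : ℕ) :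
    betaVal β (fun k ↦ quasiGreedySeq β x (n + k)) = (quasiGreedyMap β)^[n] x := by
  simp only [quasiGreedySeq_add]
  exact betaVal_quasiGreedySeq hβ (iterate_quasiGreedyMap_mem hβ hx n)

lemma exists_ge_quasiGreedySeq_eq_one (hβ : β ∈ Set.Ioo 1 2) (hx : x ∈ Set.Ioc 0 1) (N : ℕ) :
    ∃ n ≥ N, quasiGreedySeq β x n = 1 := by
  by_contra! hne
  have hzero (k : ℕ) : quasiGreedySeq β x (N + k) = 0 := by
    have := quasiGreedySeq_le_one β x (N + k)
    have := hne (N + k) (by lia)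
    lia
  have hval := betaVal_quasiGreedySeq_shift hβ hx N
  simp only [hzero, betaVal, Nat.cast_zero, zero_div, tsum_zero] at hval
  exact (iterate_quasiGreedyMap_mem hβ hx N).1.ne hval

lemma not_quasiGreedySeq_lexLt (hβ : β ∈ Set.Ioo 1 2) (hx : x ∈ Set.Ioc 0 1)
    (ha : ∀ n, a n ≤ 1) (hinf : ∀ N, ∃ n ≥ N, a n = 1) (hval : betaVal β a = x) :
    ¬ LexLt (quasiGreedySeq β x) a := by
  rintro ⟨n, hprefix, hlt⟩
  have htail : betaVal β (fun k ↦ a (n + k)) = (quasiGreedyMap β)^[n] x := by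
    rw [← betaVal_quasiGreedySeq_shift hβ hx, betaVal_shift_eq_of_prefix_eq hβ.1
      (quasiGreedySeq_le_one β x) ha hprefix ((betaVal_quasiGreedySeq hβ hx).trans hval.symm)]
  have hone : a n = 1 := by have := ha n; lia
  have hnext_pos : 0 < betaVal β (fun k ↦ a (n + 1 + k)) := by
    obtain ⟨m, hm, ham⟩ := hinf (n + 1)
    exact betaVal_pos hβ.1 (fun k ↦ ha _) ⟨m - (n + 1), by rwa [Nat.add_sub_cancel' hm]⟩
  rw [betaVal_shift_succ hβ.1 ha, htail, hone, Nat.cast_one, sub_pos] at hnext_pos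
  have hdigit : quasiGreedySeq β x n = 1 := quasiGreedyDigit_of_one_lt hnext_pos
  lia

lemma QuasiGreedy.eq_quasiGreedySeq {η : ℕ → ℕ} (hη : QuasiGreedy β η) (hβ : β ∈ Set.Ioo 1 2) :
    η = quasiGreedySeq β 1 := by
  obtain ⟨hdigit, hinf, hval, hmax⟩ := hη
  have hmem : (1 : ℝ) ∈ Set.Ioc 0 1 := by simp
  by_contra hne
  exact not_quasiGreedySeq_lexLt hβ hmem hdigit hinf hval
    (hmax _ (quasiGreedySeq_le_one β 1) (exists_ge_quasiGreedySeq_eq_one hβ hmem)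
      (betaVal_quasiGreedySeq hβ hmem) (Ne.symm hne))

lemma greedy_terminates_of_iterate_eq_one_div {g : ℕ → ℕ} {n : ℕ} (hβ : β ∈ Set.Ioo 1 2)
    (hx : x ∈ Set.Ioc 0 1) (hg : ∀ n, g n ≤ 1) (hgval : betaVal β g = x)
    (hgmax : ∀ b : ℕ → ℕ, (∀ n, b n ≤ 1) → betaVal β b = x → b ≠ g → LexLt b g)
    (horbit : (quasiGreedyMap β)^[n] x = 1 / β) : ∃ N, ∀ m ≥ N, g m = 0 := by
  have hβ₀ : β ≠ 0 := (zero_lt_one.trans hβ.1).ne'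
  have hdigit : quasiGreedySeq β x n = 0 :=
    quasiGreedyDigit_of_le_one (by rw [horbit, mul_one_div_cancel hβ₀])
  obtain ⟨b, hb, hbval, hbzero, hlt⟩ := exists_terminating_lexLt hβ.1 (quasiGreedySeq_le_one β x)
    hdigit ((betaVal_quasiGreedySeq_shift hβ hx n).trans horbit)
  by_contra! hnonzero
  have hinf (N : ℕ) : ∃ m ≥ N, g m = 1 := by
    obtain ⟨m, hm, hgm⟩ := hnonzero N
    exact ⟨m, hm, by have := hg m; lia⟩
  have hne : b ≠ g := by
    rintro rfl
    obtain ⟨m, hm, hbm⟩ := hnonzero (n + 1)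
    exact hbm (hbzero m hm)
  have hbg := hgmax b hb (hbval.trans (betaVal_quasiGreedySeq hβ hx)) hne
  exact not_quasiGreedySeq_lexLt hβ hx hg hinf hgval (hlt.trans hbg)

end Algorithm

/-- The interior of the switch region `[1 / β, 1 / (β * (β - 1))]`, the set of points at which an
expansion may start with either digit. Outside it the quasi-greedy map commutes with the reflection
`x ↦ 1 / (β - 1) - x`, which exchanges the two endpoints. -/
def switchInterior (β : ℝ) : Set ℝ := Set.Ioo (1 / β) (1 / (β * (β - 1)))

section Reflection

variable {β x : ℝ}

lemma one_div_add_one_div_mul_sub_one (hβ : 1 < β) :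
    1 / β + 1 / (β * (β - 1)) = 1 / (β - 1) := by
  have hβ₁ : β - 1 ≠ 0 := by linarith
  field_simp
  ring

lemma reflect_notMem_switchInterior (hβ : 1 < β) (hx : x ∉ switchInterior β) :
    1 / (β - 1) - x ∉ switchInterior β := by
  have hsum := one_div_add_one_div_mul_sub_one hβ
  rintro ⟨hl, hr⟩
  exact hx ⟨by linarith, by linarith⟩

lemma quasiGreedyDigit_reflect (hβ : β ∈ Set.Ioo 1 2) (hx : x ∉ switchInterior β) :
    quasiGreedyDigit β (1 / (β - 1) - x) = 1 - quasiGreedyDigit β x := by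
  obtain ⟨hβ₁, hβ₂⟩ := hβ
  have hβ₀ : 0 < β := by linarith
  have hβ_sub : 0 < β - 1 := by linarith
  have hone_lt : 1 < 1 / (β - 1) := (one_lt_div hβ_sub).2 (by linarith)
  have hmul : β * (1 / (β - 1) - x) = 1 / (β - 1) + 1 - β * x := by
    field_simp
    ring
  rcases le_or_gt x (1 / β) with hle | hgt
  · have hx_le : β * x ≤ 1 := (le_div_iff₀' hβ₀).1 hle
    rw [quasiGreedyDigit_of_le_one hx_le, quasiGreedyDigit_of_one_lt (by linarith)]
  · have hx_ge : 1 / (β - 1) ≤ β * x := by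
      rw [← div_le_iff₀' hβ₀, div_div, mul_comm]
      exact not_lt.1 fun hlt ↦ hx ⟨hgt, hlt⟩
    rw [quasiGreedyDigit_of_one_lt (hone_lt.trans_le hx_ge),
      quasiGreedyDigit_of_le_one (by linarith)]

lemma quasiGreedyMap_reflect (hβ : β ∈ Set.Ioo 1 2) (hx : x ∉ switchInterior β) :
    quasiGreedyMap β (1 / (β - 1) - x) = 1 / (β - 1) - quasiGreedyMap β x := by
  have hβ₁ : β - 1 ≠ 0 := by linarith [hβ.1]
  rw [quasiGreedyMap, quasiGreedyMap, quasiGreedyDigit_reflect hβ hx,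
    Nat.cast_sub (quasiGreedyDigit_le_one β x)]
  field_simp
  push_cast
  ring

lemma iterate_quasiGreedyMap_reflect (hβ : β ∈ Set.Ioo 1 2) {n : ℕ}
    (havoid : ∀ i < n, (quasiGreedyMap β)^[i] x ∉ switchInterior β) :
    (quasiGreedyMap β)^[n] (1 / (β - 1) - x) = 1 / (β - 1) - (quasiGreedyMap β)^[n] x := by
  induction n with
  | zero => rfl
  | succ n ih =>
    rw [Function.iterate_succ_apply', Function.iterate_succ_apply',
      ih fun i hi ↦ havoid i (hi.trans n.lt_succ_self),
      quasiGreedyMap_reflect hβ (havoid n n.lt_succ_self)]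

-- Beyond time `p` the orbit runs through the reflections of its earlier points.
lemma iterate_notMem_switchInterior_of_iterate_eq_reflect (hβ : β ∈ Set.Ioo 1 2) {p : ℕ}
    (hp : 0 < p) (hreflect : (quasiGreedyMap β)^[p] x = 1 / (β - 1) - x)
    (havoid : ∀ i < p, (quasiGreedyMap β)^[i] x ∉ switchInterior β) (n : ℕ) :
    (quasiGreedyMap β)^[n] x ∉ switchInterior β := by
  induction n using Nat.strong_induction_on with
  | _ n ih =>
    rcases lt_or_ge n p with hlt | hge
    · exact havoid n hlt
    · obtain ⟨m, rfl⟩ := Nat.exists_eq_add_of_le' hge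
      rw [Function.iterate_add_apply, hreflect,
        iterate_quasiGreedyMap_reflect hβ fun i hi ↦ ih i (by lia)]
      exact reflect_notMem_switchInterior hβ.1 (ih m (by lia))

lemma quasiGreedySeq_add_eq_one_sub (hβ : β ∈ Set.Ioo 1 2) {p : ℕ} (hp : 0 < p)
    (hreflect : (quasiGreedyMap β)^[p] x = 1 / (β - 1) - x)
    (havoid : ∀ i < p, (quasiGreedyMap β)^[i] x ∉ switchInterior β) (n : ℕ) :
    quasiGreedySeq β x (n + p) = 1 - quasiGreedySeq β x n := by
  have havoid_all := iterate_notMem_switchInterior_of_iterate_eq_reflect hβ hp hreflect havoid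
  rw [add_comm, quasiGreedySeq_add, hreflect, quasiGreedySeq,
    iterate_quasiGreedyMap_reflect hβ fun i _ ↦ havoid_all i,
    quasiGreedyDigit_reflect hβ (havoid_all n), quasiGreedySeq]

lemma quasiGreedyMap_one_div_mul_sub_one (hβ : β ∈ Set.Ioo 1 2) :
    quasiGreedyMap β (1 / (β * (β - 1))) = 1 / (β - 1) - 1 := by
  have hβ₀ : β ≠ 0 := by linarith [hβ.1]
  have hβ_sub : 0 < β - 1 := by linarith [hβ.1]
  have hmul : β * (1 / (β * (β - 1))) = 1 / (β - 1) := by field_simp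
  have hone_lt : 1 < 1 / (β - 1) := (one_lt_div hβ_sub).2 (by linarith [hβ.2])
  rw [quasiGreedyMap, quasiGreedyDigit_of_one_lt (by rwa [hmul]), hmul, Nat.cast_one]

lemma iterate_quasiGreedyMap_eq_one_div_of_hit (hβ : β ∈ Set.Ioo 1 2) {k : ℕ}
    (hhit : (quasiGreedyMap β)^[k] x = 1 / (β * (β - 1)))
    (hreflect : (quasiGreedyMap β)^[k + 1] x = 1 / (β - 1) - x)
    (havoid : ∀ i < k, (quasiGreedyMap β)^[i] x ∉ switchInterior β) :
    (quasiGreedyMap β)^[k + (k + 1)] x = 1 / β := by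
  rw [Function.iterate_add_apply, hreflect, iterate_quasiGreedyMap_reflect hβ havoid, hhit,
    sub_eq_iff_eq_add, one_div_add_one_div_mul_sub_one hβ.1]

end Reflection

lemma HitsFirst.exists_forall_notMem_switchInterior {β : ℝ} {Q : ℕ → ℝ}
    (hhit : HitsFirst β Q (1 / (β * (β - 1)))) (h₀ : ∀ n, Q n ≤ Q 0) :
    ∃ k, Q k = 1 / (β * (β - 1)) ∧ ∀ i < k + 1, Q i ∉ switchInterior β := by
  obtain ⟨k, -, hk, hbefore⟩ := hhit
  refine ⟨k, hk, fun i hi ⟨hl, hr⟩ ↦ ?_⟩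
  have hik : i ≠ k := by
    rintro rfl
    exact hr.ne hk
  have hi₀ : i ≠ 0 := by
    rintro rfl
    exact (h₀ k).not_gt (by rwa [hk])
  rcases hbefore i (by lia) (by lia) with hlow | hhigh
  · exact hl.not_gt hlow.2
  · exact hr.not_gt hhigh.1

/-- if the quasi-greedy orbit of `1` hits `1/(β(β-1))` for the first time,
then the greedy expansion `g` of `1` is finite, and there is `n₀ ≥ 1` with
`η_{n+n₀} = 1 - η_n` for all `n ≥ 1`; in particular `η` is periodic with period `2n₀`. -/
theorem statement15 (β : ℝ) (hβ : β ∈ Set.Ioo (1 : ℝ) 2)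
    (η : ℕ → ℕ) (hη : QuasiGreedy β η)
    (Q : ℕ → ℝ) (hQ : ∀ n, Q n = betaVal β (fun k => η (n + k)))
    (g : ℕ → ℕ) (hg01 : ∀ n, g n ≤ 1) (hgval : betaVal β g = 1)
    (hgmax : ∀ b : ℕ → ℕ, (∀ n, b n ≤ 1) → betaVal β b = 1 → b ≠ g → LexLt b g)
    (hhit : HitsFirst β Q (1 / (β * (β - 1)))) :
    (∃ N, ∀ n ≥ N, g n = 0) ∧
      ∃ n₀ ≥ 1, (∀ n, η (n + n₀) = 1 - η n) ∧ (∀ n, η (n + 2 * n₀) = η n) := by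
  have hmem : (1 : ℝ) ∈ Set.Ioc 0 1 := by simp
  obtain rfl := hη.eq_quasiGreedySeq hβ
  obtain rfl : Q = fun n ↦ (quasiGreedyMap β)^[n] 1 :=
    funext fun n ↦ (hQ n).trans (betaVal_quasiGreedySeq_shift hβ hmem n)
  obtain ⟨k, hk, havoid⟩ :=
    hhit.exists_forall_notMem_switchInterior fun n ↦ (iterate_quasiGreedyMap_mem hβ hmem n).2
  have hreflect : (quasiGreedyMap β)^[k + 1] 1 = 1 / (β - 1) - 1 := by
    rw [Function.iterate_succ_apply', hk, quasiGreedyMap_one_div_mul_sub_one hβ]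
  have hanti := quasiGreedySeq_add_eq_one_sub hβ k.succ_pos hreflect havoid
  refine ⟨greedy_terminates_of_iterate_eq_one_div hβ hmem hg01 hgval hgmax
    (iterate_quasiGreedyMap_eq_one_div_of_hit hβ hk hreflect fun i hi ↦ havoid i (by lia)),
    k + 1, k.succ_pos, hanti, fun n ↦ ?_⟩
  rw [two_mul, ← add_assoc, hanti, hanti, Nat.sub_sub_self (quasiGreedySeq_le_one β 1 n)]
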